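/- Let X be a complex Banach space, let T be a bounded linear operator on X that is ag-Drazin invertible in the Banach algebra L(X) of bounded linear operators on X, and let F be a bounded linear operator on X of finite rank (i.e., the range of F is finite-dimensional). If TF = FT, then T + F is ag-Drazin invertible in L(X). -/

import Mathlib

open Filter Topology

/-- An element of a complex Banach algebra is quasinilpotent if its spectrum is `{0}`. -/
def IsQuasinilpotent {A : Type*} [NormedRing A] [NormedAlgebra ℂ A] (b : A) : Prop :=
  spectrum ℂ b = {0}

/-- `a` is generalized Drazin invertible. -/
def IsGDrazinInv {A : Type*} [NormedRing A] [NormedAlgebra ℂ A] (a : A) : Prop :=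
  ∃ x : A, a * x = x * a ∧ x * a * x = x ∧ IsQuasinilpotent (a - a ^ 2 * x)

/-- `a ∈ A^acc`: `a - λ1` is generalized Drazin invertible for all nonzero `λ`. -/
def MemAcc {A : Type*} [NormedRing A] [NormedAlgebra ℂ A] (a : A) : Prop :=
  ∀ l : ℂ, l ≠ 0 → IsGDrazinInv (a - l • (1 : A))

/-- `x` is an ag-Drazin inverse of `a`. -/
def IsAgDrazinInverseOf {A : Type*} [NormedRing A] [NormedAlgebra ℂ A] (x a : A) : Prop :=
  a * x = x * a ∧ x * a * x = x ∧ MemAcc (a - a ^ 2 * x)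

/-- `a` is ag-Drazin invertible. -/
def IsAgDrazinInv {A : Type*} [NormedRing A] [NormedAlgebra ℂ A] (a : A) : Prop :=
  ∃ x : A, IsAgDrazinInverseOf x a

/-- The generalized Drazin spectrum. -/
def gDrazinSpectrum {A : Type*} [NormedRing A] [NormedAlgebra ℂ A] (a : A) : Set ℂ :=
  {l : ℂ | ¬ IsGDrazinInv (a - l • (1 : A))}

/-- The ag-Drazin spectrum. -/
def agDrazinSpectrum {A : Type*} [NormedRing A] [NormedAlgebra ℂ A] (a : A) : Set ℂ :=
  {l : ℂ | ¬ IsAgDrazinInv (a - l • (1 : A))}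

set_option linter.unusedSimpArgs false
set_option linter.unusedSectionVars false

section
variable {A : Type*} [NormedRing A] [NormedAlgebra ℂ A]

theorem ag_unit_comb {e u v : A} (he : e * e = e) (hu : Commute e u) (hv : Commute e v)
    (iu : IsUnit u) (iv : IsUnit v) : IsUnit (u * e + v * (1 - e)) := by
  obtain ⟨u, rfl⟩ := iu
  obtain ⟨v, rfl⟩ := iv
  have hu' : e * (↑u⁻¹ : A) = ↑u⁻¹ * e := (Commute.units_inv_right hu)
  have hv' : e * (↑v⁻¹ : A) = ↑v⁻¹ * e := (Commute.units_inv_right hv)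
  have hu1 : e * (u : A) = u * e := hu
  have hv1 : e * (v : A) = v * e := hv
  have r1 : ∀ z, e * ((u : A) * z) = u * (e * z) := fun z => by rw [← mul_assoc, hu1, mul_assoc]
  have r2 : ∀ z, e * ((v : A) * z) = v * (e * z) := fun z => by rw [← mul_assoc, hv1, mul_assoc]
  have r3 : ∀ z, e * ((↑u⁻¹ : A) * z) = ↑u⁻¹ * (e * z) := fun z => by
    rw [← mul_assoc, hu', mul_assoc]
  have r4 : ∀ z, e * ((↑v⁻¹ : A) * z) = ↑v⁻¹ * (e * z) := fun z => by
    rw [← mul_assoc, hv', mul_assoc]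
  refine ⟨⟨u * e + v * (1 - e), ↑u⁻¹ * e + ↑v⁻¹ * (1 - e), ?_, ?_⟩, rfl⟩
  · simp only [mul_add, add_mul, mul_sub, sub_mul, mul_one, one_mul, mul_assoc, r1, r2, r3, r4,
      hu', hv', hu1, hv1, he, Units.mul_inv_cancel_left, Units.mul_inv]
    abel
  · simp only [mul_add, add_mul, mul_sub, sub_mul, mul_one, one_mul, mul_assoc, r1, r2, r3, r4,
      hu', hv', hu1, hv1, he, Units.inv_mul_cancel_left, Units.inv_mul]
    abel

/-- Quasinilpotency phrased with units. -/
def AgQN (b : A) : Prop := ∀ z : ℂ, z ≠ 0 → IsUnit (z • (1 : A) + b)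

theorem ag_qn_iff [CompleteSpace A] [Nontrivial A] (b : A) : IsQuasinilpotent b ↔ AgQN b := by
  have key : ∀ z : ℂ, z ∉ spectrum ℂ b ↔ IsUnit ((-z) • (1 : A) + b) := by
    intro z
    rw [spectrum.notMem_iff, ← IsUnit.neg_iff, Algebra.algebraMap_eq_smul_one]
    congr! 1
    rw [neg_smul]; abel
  constructor
  · intro h z hz
    have := (key (-z)).1 (by rw [h]; simpa using hz)
    simpa using this
  · intro h
    have h1 : spectrum ℂ b ⊆ {0} := by
      intro z hz
      by_contra hz0
      exact (key z).2 (h (-z) (by simpa using hz0)) hz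
    exact (Set.Nonempty.subset_singleton_iff (spectrum.nonempty b)).1 h1

theorem ag_qn_zero [CompleteSpace A] [Nontrivial A] {b x y : A} (hb : AgQN b)
    (h : y = b * y * x ∨ y = x * y * b) : y = 0 := by
  have hs : spectrum ℂ b = {0} := (ag_qn_iff b).2 hb
  have hr : spectralRadius ℂ b = 0 := by simp [spectralRadius, hs]
  have ht := spectrum.pow_nnnorm_pow_one_div_tendsto_nhds_spectralRadius b
  rw [hr] at ht
  have hbound : ∀ n : ℕ, ‖y‖ ≤ ‖b ^ n‖ * (‖x‖ + 1) ^ n * ‖y‖ * ‖(1 : A)‖ := by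
    intro n
    have hx : ‖x ^ n‖ ≤ ‖x‖ ^ n * ‖(1 : A)‖ := by
      cases n with
      | zero => simp
      | succ n =>
        refine (norm_pow_le' x (Nat.succ_pos n)).trans ?_
        have : 1 ≤ ‖(1 : A)‖ := one_le_norm_one A
        exact le_mul_of_one_le_right (by positivity) this
    have hx2 : ‖x‖ ^ n ≤ (‖x‖ + 1) ^ n := by gcongr; linarith
    have hx3 : ‖x ^ n‖ ≤ (‖x‖ + 1) ^ n * ‖(1 : A)‖ := hx.trans (by gcongr)
    rcases h with h | h
    · have hn : y = b ^ n * y * x ^ n := by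
        clear hx hx2 hx3
        induction n with
        | zero => simp
        | succ n ih =>
          calc y = b ^ n * y * x ^ n := ih
            _ = b ^ n * (b * y * x) * x ^ n := by rw [← h]
            _ = _ := by rw [pow_succ, pow_succ']; simp only [mul_assoc]
      calc ‖y‖ = ‖b ^ n * y * x ^ n‖ := by rw [← hn]
        _ ≤ ‖b ^ n‖ * ‖y‖ * ‖x ^ n‖ := norm_mul₃_le
        _ ≤ ‖b ^ n‖ * ‖y‖ * ((‖x‖ + 1) ^ n * ‖(1 : A)‖) := by gcongr
        _ = _ := by ring
    · have hn : y = x ^ n * y * b ^ n := by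
        clear hx hx2 hx3
        induction n with
        | zero => simp
        | succ n ih =>
          calc y = x ^ n * y * b ^ n := ih
            _ = x ^ n * (x * y * b) * b ^ n := by rw [← h]
            _ = _ := by rw [pow_succ, pow_succ']; simp only [mul_assoc]
      calc ‖y‖ = ‖x ^ n * y * b ^ n‖ := by rw [← hn]
        _ ≤ ‖x ^ n‖ * ‖y‖ * ‖b ^ n‖ := norm_mul₃_le
        _ ≤ ((‖x‖ + 1) ^ n * ‖(1 : A)‖) * ‖y‖ * ‖b ^ n‖ := by gcongr
        _ = _ := by ring
  set C : ℝ := ‖x‖ + 1 with hC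
  have hCpos : 0 < C := by positivity
  have hlim : Tendsto (fun n : ℕ => (1/2 : ℝ) ^ n * ‖y‖ * ‖(1 : A)‖) atTop (𝓝 0) := by
    have := tendsto_pow_atTop_nhds_zero_of_lt_one (r := (1/2:ℝ)) (by norm_num) (by norm_num)
    simpa using (this.mul_const ‖y‖).mul_const ‖(1 : A)‖
  have hev : ∀ᶠ n : ℕ in atTop, ‖y‖ ≤ (1/2 : ℝ) ^ n * ‖y‖ * ‖(1 : A)‖ := by
    have h1 : (0 : ENNReal) < ENNReal.ofReal (1 / (2 * C)) := by
      rw [ENNReal.ofReal_pos]; positivity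
    filter_upwards [ht.eventually (gt_mem_nhds h1), eventually_gt_atTop 0] with n hn hn0
    refine (hbound n).trans ?_
    have hn0' : (n : ℝ) ≠ 0 := by positivity
    have h2 : ‖b ^ n‖ ≤ (1 / (2 * C)) ^ n := by
      have := ENNReal.rpow_le_rpow hn.le (z := (n : ℝ)) (by positivity)
      rw [← ENNReal.rpow_mul, one_div_mul_cancel hn0', ENNReal.rpow_one, ENNReal.rpow_natCast,
        ← ENNReal.ofReal_pow (by positivity)] at this
      have := ENNReal.toReal_mono ENNReal.ofReal_ne_top this
      rwa [ENNReal.toReal_ofReal (by positivity), ENNReal.coe_toReal, coe_nnnorm] at this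
    calc ‖b ^ n‖ * C ^ n * ‖y‖ * ‖(1 : A)‖ ≤ (1 / (2 * C)) ^ n * C ^ n * ‖y‖ * ‖(1 : A)‖ := by gcongr
      _ = _ := by rw [← mul_pow]; congr 3; field_simp
  have := ge_of_tendsto hlim hev
  exact norm_le_zero_iff.1 this

/-- spectral idempotent data -/
def AgSp (u p : A) : Prop :=
  p * p = p ∧ Commute p u ∧ IsUnit (u * (1 - p) + p) ∧ AgQN (u * p)

theorem ag_inv_data {u x : A} (hc : u * x = x * u) (hx : x * u * x = x) :
    (u * x) * (u * x) = u * x ∧ Commute (u * x) u ∧ IsUnit (u * (u * x) + (1 - u * x)) := by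
  have e1 : u * x * (u * x) = u * x := by rw [← mul_assoc, mul_assoc u x u, mul_assoc u, hx]
  have e2 : x * (u * x) = x := by rw [← mul_assoc, hx]
  have e3 : u * x * x = x := by rw [hc, mul_assoc, hc, ← mul_assoc] ; rw [mul_assoc, ← hc, e2]
  have e4 : u * x * u = u * (u * x) := by rw [mul_assoc, hc]
  have e4' : x * u = u * x := hc.symm
  have e5 : u * (x * x) = x := by rw [← mul_assoc, e3]
  refine ⟨e1, e4, ⟨⟨_, x + (1 - u * x), ?_, ?_⟩, rfl⟩⟩
  · have r : ∀ z, x * (u * z) = u * (x * z) := fun z => by rw [← mul_assoc, e4', mul_assoc]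
    simp only [mul_add, add_mul, mul_sub, sub_mul, mul_one, one_mul, mul_assoc, e4', e5, r]
    abel
  · have r : ∀ z, x * (u * z) = u * (x * z) := fun z => by rw [← mul_assoc, e4', mul_assoc]
    simp only [mul_add, add_mul, mul_sub, sub_mul, mul_one, one_mul, mul_assoc, e4', e5, r]
    abel

theorem ag_data_inv {u e : A} (he : e * e = e) (hc : Commute e u)
    (hw : IsUnit (u * e + (1 - e))) : ∃ x, u * x = x * u ∧ x * u * x = x ∧ u * x = e := by
  obtain ⟨w, hw⟩ := hw
  have hc1 : e * u = u * e := hc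
  have hce : Commute e (w : A) := by
    rw [hw]
    exact (hc.mul_right (Commute.refl e)).add_right ((Commute.one_right e).sub_right (Commute.refl e))
  have hcu : Commute u (w : A) := by
    rw [hw]
    exact ((Commute.refl u).mul_right hc.symm).add_right ((Commute.one_right u).sub_right hc.symm)
  have hce' : e * (↑w⁻¹ : A) = ↑w⁻¹ * e := Commute.units_inv_right hce
  have hcu' : u * (↑w⁻¹ : A) = ↑w⁻¹ * u := Commute.units_inv_right hcu
  have hwe : (w : A) * e = u * e := by
    rw [hw, add_mul, sub_mul, mul_assoc, he, one_mul, sub_self, add_zero]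
  have hux : u * (↑w⁻¹ * e) = e := by
    rw [← mul_assoc, hcu', mul_assoc, ← hwe, Units.inv_mul_cancel_left]
  have hxu : ↑w⁻¹ * e * u = e := by
    rw [mul_assoc, hc1, ← hwe, Units.inv_mul_cancel_left]
  refine ⟨↑w⁻¹ * e, by rw [hux, hxu], ?_, hux⟩
  rw [hxu, ← mul_assoc, hce', mul_assoc, he]

theorem ag_gd_iff [CompleteSpace A] [Nontrivial A] (u : A) :
    IsGDrazinInv u ↔ ∃ p, AgSp u p := by
  constructor
  · rintro ⟨x, hc, hx, hq⟩
    obtain ⟨h1, h2, h3⟩ := ag_inv_data hc hx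
    refine ⟨1 - u * x, ?_, (Commute.one_left u).sub_left h2, ?_, ?_⟩
    · simp only [mul_sub, sub_mul, h1, mul_one, one_mul]; abel
    · simpa using h3
    · rw [← ag_qn_iff]
      convert hq using 1
      rw [mul_sub, mul_one, ← mul_assoc, sq]
  · rintro ⟨p, hp, hc, hw, hq⟩
    obtain ⟨x, h1, h2, h3⟩ := ag_data_inv (u := u) (e := 1 - p)
      (by simp only [mul_sub, sub_mul, hp, mul_one, one_mul]; abel)
      ((Commute.one_left u).sub_left hc) (by simpa using hw)
    refine ⟨x, h1, h2, ?_⟩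
    rw [ag_qn_iff]
    convert hq using 1
    rw [sq, mul_assoc, h3, mul_sub, mul_one, sub_sub_cancel]

theorem ag_bicomm [CompleteSpace A] [Nontrivial A] {u p c : A} (h : AgSp u p)
    (hc : Commute c u) : Commute c p := by
  obtain ⟨hp, hpu, ⟨w, hw⟩, hq⟩ := h
  have hpu1 : p * u = u * p := hpu
  have hc1 : c * u = u * c := hc
  have r : ∀ z, p * (u * z) = u * (p * z) := fun z => by rw [← mul_assoc, hpu1, mul_assoc]
  have r2 : ∀ z, c * (u * z) = u * (c * z) := fun z => by rw [← mul_assoc, hc1, mul_assoc]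
  have r3 : ∀ z, p * (p * z) = p * z := fun z => by rw [← mul_assoc, hp]
  have y1 : p * c * (1 - p) = 0 := by
    refine ag_qn_zero (x := ↑w⁻¹) hq (Or.inl ?_)
    rw [Units.eq_mul_inv_iff_mul_eq, hw]
    simp only [mul_add, add_mul, mul_sub, sub_mul, mul_one, one_mul, mul_assoc, hpu1, r, hc1, r2, hp, r3]
    abel
  have y2 : (1 - p) * c * p = 0 := by
    refine ag_qn_zero (x := ↑w⁻¹) hq (Or.inr ?_)
    rw [mul_assoc _ _ (u * p), Units.eq_inv_mul_iff_mul_eq, hw]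
    simp only [mul_add, add_mul, mul_sub, sub_mul, mul_one, one_mul, mul_assoc, hpu1, r, hc1, r2, hp, r3]
    abel
  have z1 : p * c = p * c * p := by simpa [mul_sub, sub_eq_zero] using y1
  have z2 : c * p = p * c * p := by simpa [sub_mul, sub_eq_zero] using y2
  show c * p = p * c
  rw [z1, z2]

theorem ag_comb [CompleteSpace A] [Nontrivial A] {e u v : A} (he : e * e = e) (hu : Commute e u)
    (hv : Commute e v) (iu : IsGDrazinInv u) (iv : IsGDrazinInv v) :
    IsGDrazinInv (u * e + v * (1 - e)) := by
  rw [ag_gd_iff] at *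
  obtain ⟨p, hp⟩ := iu
  obtain ⟨q, hq⟩ := iv
  have cp := ag_bicomm hp hu
  have cq := ag_bicomm hq hv
  obtain ⟨p1, p2, p3, p4⟩ := hp
  obtain ⟨q1, q2, q3, q4⟩ := hq
  have a1 : e * u = u * e := hu
  have a2 : e * v = v * e := hv
  have a3 : e * p = p * e := cp
  have a4 : e * q = q * e := cq
  have a5 : p * u = u * p := p2
  have a6 : q * v = v * q := q2
  have b1 : ∀ z, e * (u * z) = u * (e * z) := fun z => by rw [← mul_assoc, a1, mul_assoc]
  have b2 : ∀ z, e * (v * z) = v * (e * z) := fun z => by rw [← mul_assoc, a2, mul_assoc]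
  have b3 : ∀ z, e * (p * z) = p * (e * z) := fun z => by rw [← mul_assoc, a3, mul_assoc]
  have b4 : ∀ z, e * (q * z) = q * (e * z) := fun z => by rw [← mul_assoc, a4, mul_assoc]
  have b5 : ∀ z, p * (u * z) = u * (p * z) := fun z => by rw [← mul_assoc, a5, mul_assoc]
  have b6 : ∀ z, q * (v * z) = v * (q * z) := fun z => by rw [← mul_assoc, a6, mul_assoc]
  have c1 : ∀ z, e * (e * z) = e * z := fun z => by rw [← mul_assoc, he]
  have c2 : ∀ z, p * (p * z) = p * z := fun z => by rw [← mul_assoc, p1]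
  have c3 : ∀ z, q * (q * z) = q * z := fun z => by rw [← mul_assoc, q1]
  refine ⟨p * e + q * (1 - e), ?_, ?_, ?_, ?_⟩
  · simp only [mul_add, add_mul, mul_sub, sub_mul, mul_one, one_mul, mul_assoc, *]
    abel
  · show _ * _ = _ * _
    simp only [mul_add, add_mul, mul_sub, sub_mul, mul_one, one_mul, mul_assoc, *]
    abel
  · have := ag_unit_comb he (u := u * (1 - p) + p) (v := v * (1 - q) + q)
      ((hu.mul_right ((Commute.one_right e).sub_right cp)).add_right cp)
      ((hv.mul_right ((Commute.one_right e).sub_right cq)).add_right cq) p3 q3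
    convert this using 1
    simp only [mul_add, add_mul, mul_sub, sub_mul, mul_one, one_mul, mul_assoc, a1,a2,a3,a4,a5,a6,b1,b2,b3,b4,b5,b6,c1,c2,c3,he,p1,q1]
    abel
  · intro z hz
    have := ag_unit_comb he (u := z • (1 : A) + u * p) (v := z • (1 : A) + v * q)
      (((Commute.one_right e).smul_right z).add_right (hu.mul_right cp))
      (((Commute.one_right e).smul_right z).add_right (hv.mul_right cq)) (p4 z hz) (q4 z hz)
    convert this using 1
    simp only [mul_add, add_mul, mul_sub, sub_mul, mul_one, one_mul, mul_assoc, smul_mul_assoc, a1,a2,a3,a4,a5,a6,b1,b2,b3,b4,b5,b6,c1,c2,c3,he,p1,q1]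
    abel

theorem ag_gd_add_nil [CompleteSpace A] [Nontrivial A] {u n : A} (hn : IsNilpotent n)
    (hc : Commute n u) (hu : IsGDrazinInv u) : IsGDrazinInv (u + n) := by
  rw [ag_gd_iff] at *
  obtain ⟨p, hp⟩ := hu
  have cn := ag_bicomm hp hc
  obtain ⟨p1, p2, p3, p4⟩ := hp
  refine ⟨p, p1, p2.add_right cn.symm, ?_, ?_⟩
  · have : (u + n) * (1 - p) + p = (u * (1 - p) + p) + n * (1 - p) := by noncomm_ring
    rw [this]
    have cn1 : Commute n (1 - p) := (Commute.one_right n).sub_right cn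
    have cu1 : Commute (1 - p) u := (Commute.one_left u).sub_left p2
    refine (cn1.isNilpotent_mul_right hn).isUnit_add_left_of_commute p3 ?_
    refine Commute.mul_left ?_ ?_
    · exact (hc.mul_right cn1).add_right cn
    · exact (cu1.mul_right (Commute.refl _)).add_right ((Commute.one_left _).sub_left (Commute.refl p))
  · intro z hz
    have : z • (1:A) + (u + n) * p = (z • (1:A) + u * p) + n * p := by rw [add_mul]; abel
    rw [this]
    refine (cn.isNilpotent_mul_right hn).isUnit_add_left_of_commute (p4 z hz) ?_
    refine Commute.mul_left ?_ ?_
    · exact ((Commute.one_right n).smul_right z).add_right (hc.mul_right cn)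
    · exact ((Commute.one_right p).smul_right z).add_right (p2.mul_right (Commute.refl p))

theorem ag_qn_nil {b : A} (hb : IsNilpotent b) : AgQN b := by
  intro z hz
  have hu : IsUnit (z • (1 : A)) := by
    rw [← Algebra.algebraMap_eq_smul_one]; exact (IsUnit.mk0 z hz).map (algebraMap ℂ A)
  exact hb.isUnit_add_left_of_commute hu ((Commute.one_right b).smul_right z)

theorem ag_unit_gd [CompleteSpace A] [Nontrivial A] {u : A} (hu : IsUnit u) : IsGDrazinInv u := by
  rw [ag_gd_iff]
  exact ⟨0, by simp, Commute.zero_left u, by simpa using hu, by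
    rw [mul_zero]; exact ag_qn_nil IsNilpotent.zero⟩

open Polynomial in
theorem ag_split (m : ℂ[X]) (hm : m ≠ 0) : ∃ k : ℕ, ∃ q : ℂ[X], m = X ^ k * q ∧ q.eval 0 ≠ 0 := by
  obtain ⟨q, h1, h2⟩ := exists_eq_pow_rootMultiplicity_mul_and_not_dvd m hm 0
  refine ⟨_, q, by simpa using h1, ?_⟩
  rwa [dvd_iff_isRoot] at h2

open Polynomial in
/-- Fitting idempotent of an algebraic element, as a polynomial in it. -/
theorem ag_alg (f : A) (m : ℂ[X]) (hm : m ≠ 0) (hf : aeval f m = 0) :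
    ∃ g : ℂ[X], ∃ p, p = aeval f g ∧ p * p = p ∧ IsUnit (f * (1 - p) + p) ∧ IsNilpotent (f * p) := by
  obtain ⟨k, q, rfl, hq⟩ := ag_split m hm
  have hf' : aeval f (X ^ (k + 1) * q) = 0 := by
    rw [pow_succ', mul_assoc, map_mul, hf, mul_zero]
  have hcop : IsCoprime (X ^ (k + 1) : ℂ[X]) q := by
    apply IsCoprime.pow_left
    refine (Irreducible.coprime_iff_not_dvd irreducible_X).2 ?_
    rw [X_dvd_iff, coeff_zero_eq_eval_zero]; exact hq
  obtain ⟨a, b, hab⟩ := hcop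
  have key : ∀ r s t : ℂ[X], r = s + t * (X ^ (k + 1) * q) → aeval f r = aeval f s := by
    intro r s t h; rw [h, map_add, map_mul, hf', mul_zero, add_zero]
  have hsub : 1 - aeval f (b * q) = aeval f (a * X ^ (k + 1)) := by
    rw [← map_one (aeval f (R := ℂ)), ← map_sub, ← hab]; congr 1; ring
  refine ⟨b * q, _, rfl, ?_, ?_, ?_⟩
  · rw [← map_mul]
    apply key _ _ (- a * b)
    linear_combination (b * q) * hab
  · have e : f * (1 - aeval f (b * q)) + aeval f (b * q)
        = aeval f (X * (a * X ^ (k + 1)) + b * q) := by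
      rw [hsub]; simp
    have i : aeval f ((X * (a * X ^ (k + 1)) + b * q) * (a * X ^ k * (a * X ^ (k + 1)) + b * q)) = 1 := by
      rw [← map_one (aeval f (R := ℂ))]
      apply key _ _ (a * b * (X + a * X ^ k - 2 - a * X ^ (k + 1)))
      have hP : b * q = 1 - a * X ^ (k + 1) := by rw [← hab]; ring
      have ht : a * b * (X + a * X ^ k - 2 - a * X ^ (k + 1)) * (X ^ (k + 1) * q)
        = (X + a * X ^ k - 2 - a * X ^ (k + 1)) * (a * X ^ (k + 1)) * (b * q) := by ring
      rw [ht, hP]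
      ring
    rw [e]
    refine ⟨⟨_, aeval f (a * X ^ k * (a * X ^ (k + 1)) + b * q), ?_, ?_⟩, rfl⟩
    · rw [← map_mul, i]
    · rw [← map_mul, mul_comm, i]
  · refine ⟨k + 1, ?_⟩
    have e : f * aeval f (b * q) = aeval f (X * (b * q)) := by simp
    rw [e, ← map_pow, ← map_zero (aeval f (R := ℂ))]
    apply key _ _ (b ^ (k + 1) * q ^ k)
    ring

/-- A splitting idempotent witnessing ag-Drazin invertibility. -/
def AgGood (T P : A) : Prop :=
  P * P = P ∧ Commute P T ∧ IsUnit (T * P + (1 - P)) ∧ MemAcc (T * (1 - P))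

theorem ag_good_iff (T : A) : IsAgDrazinInv T ↔ ∃ P, AgGood T P := by
  constructor
  · rintro ⟨x, hc, hx, hq⟩
    obtain ⟨h1, h2, h3⟩ := ag_inv_data hc hx
    refine ⟨T * x, h1, h2, h3, ?_⟩
    convert hq using 1
    rw [mul_sub, mul_one, ← mul_assoc, sq]
  · rintro ⟨P, hp, hc, hw, hq⟩
    obtain ⟨x, h1, h2, h3⟩ := ag_data_inv hp hc hw
    refine ⟨x, h1, h2, ?_⟩
    convert hq using 1
    rw [sq, mul_assoc, h3, mul_sub, mul_one]

theorem ag_smul_unit {z : ℂ} (hz : z ≠ 0) : IsUnit (z • (1 : A)) := by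
  rw [← Algebra.algebraMap_eq_smul_one]; exact (IsUnit.mk0 z hz).map (algebraMap ℂ A)

open Polynomial in
theorem ag_aeval_comm {c T : A} (h : Commute c T) (q : ℂ[X]) : Commute c (aeval T q) :=
  Polynomial.induction_on q
    (fun a => by rw [aeval_C]; exact (Algebra.commutes a c).symm)
    (fun r s hr hs => by rw [map_add]; exact hr.add_right hs)
    (fun n a _ => by
      rw [map_mul, aeval_C, map_pow, aeval_X]
      exact Commute.mul_right (Algebra.commutes a c).symm (h.pow_right _))

open Polynomial in
theorem ag_step [CompleteSpace A] [Nontrivial A] {T P : A} (h : AgGood T P) (q : ℂ[X])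
    (hq : IsUnit (aeval T q * (1 - P) + P)) {l : ℂ} (hl : l ≠ 0) :
    ∃ P', AgGood T P' ∧ IsUnit (aeval T ((X - C l) * q) * (1 - P') + P') := by
  obtain ⟨hP, hPT, hu, hacc⟩ := h
  obtain ⟨p, hp⟩ := (ag_gd_iff _).1 (hacc l hl)
  have cT1 : Commute T (T * (1 - P)) :=
    (Commute.refl T).mul_right ((Commute.one_right T).sub_right hPT.symm)
  have cP1 : Commute P (T * (1 - P)) :=
    hPT.mul_right ((Commute.one_right P).sub_right (Commute.refl P))
  have cTp : Commute T p :=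
    ag_bicomm hp (cT1.sub_right ((Commute.one_right T).smul_right l))
  have cPp : Commute P p :=
    ag_bicomm hp (cP1.sub_right ((Commute.one_right P).smul_right l))
  obtain ⟨p1, p2, p3, p4⟩ := hp
  set Q := aeval T q with hQ
  have cpQ : Commute p Q := ag_aeval_comm cTp.symm q
  have cPQ : Commute P Q := ag_aeval_comm hPT q
  have a1 : P * T = T * P := hPT
  have a2 : p * T = T * p := cTp.symm
  have a3 : P * p = p * P := cPp
  have a4 : P * Q = Q * P := cPQ
  have a5 : p * Q = Q * p := cpQ
  have r1 : ∀ z, P * (T * z) = T * (P * z) := fun z => by rw [← mul_assoc, a1, mul_assoc]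
  have r2 : ∀ z, p * (T * z) = T * (p * z) := fun z => by rw [← mul_assoc, a2, mul_assoc]
  have r4 : ∀ z, P * (Q * z) = Q * (P * z) := fun z => by rw [← mul_assoc, a4, mul_assoc]
  have r5 : ∀ z, p * (Q * z) = Q * (p * z) := fun z => by rw [← mul_assoc, a5, mul_assoc]
  have hpP : p * P = 0 := by
    have h0 : (l • (1 : A) + (T * (1 - P) - l • (1 : A)) * p) * (p * P) = 0 := by
      have r3 : ∀ z, P * (p * z) = p * (P * z) := fun z => by rw [← mul_assoc, a3, mul_assoc]
      have c2 : ∀ z, p * (p * z) = p * z := fun z => by rw [← mul_assoc, p1]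
      simp only [mul_add, add_mul, mul_sub, sub_mul, mul_one, one_mul, mul_assoc, smul_mul_assoc,
        a1, a2, a3, r1, r2, r3, c2, hP, p1]
      abel
    exact (p4 l hl).mul_right_eq_zero.1 h0
  have hPp : P * p = 0 := by rw [a3, hpP]
  have c1 : ∀ z, P * (p * z) = 0 := fun z => by rw [← mul_assoc, hPp, zero_mul]
  have c2 : ∀ z, p * (P * z) = 0 := fun z => by rw [← mul_assoc, hpP, zero_mul]
  have c3 : ∀ z, p * (p * z) = p * z := fun z => by rw [← mul_assoc, p1]
  have c4 : ∀ z, P * (P * z) = P * z := fun z => by rw [← mul_assoc, hP]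
  have cN : Commute p (1 - P) := (Commute.one_right p).sub_right cPp.symm
  have cTN : Commute p (T * (1 - P)) := cTp.symm.mul_right cN
  have cs : ∀ z : ℂ, ∀ x : A, Commute x (z • (1 : A)) := fun z x => (Commute.one_right x).smul_right z
  refine ⟨P + p, ⟨?_, ?_, ?_, ?_⟩, ?_⟩
  · simp only [mul_add, add_mul, hP, p1, hPp, hpP]; abel
  · exact hPT.add_left cTp.symm
  · have := ag_unit_comb p1 (u := l • (1 : A) + (T * (1 - P) - l • (1 : A)) * p)
      (v := T * P + (1 - P))
      ((cs l p).add_right ((cTN.sub_right (cs l p)).mul_right (Commute.refl p)))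
      ((cTp.symm.mul_right cPp.symm).add_right cN) (p4 l hl) hu
    convert this using 1
    simp only [mul_add, add_mul, mul_sub, sub_mul, mul_one, one_mul, mul_assoc, smul_mul_assoc,
      a1, a2, r1, r2, c1, c2, c3, c4, hP, p1, hPp, hpP, mul_zero, zero_mul]
    abel
  · intro z hz
    have := ag_comb p1 (u := (-z) • (1 : A)) (v := T * (1 - P) - z • (1 : A)) (cs _ _)
      (cTN.sub_right (cs _ _)) (ag_unit_gd (ag_smul_unit (neg_ne_zero.2 hz))) (hacc z hz)
    convert this using 1
    simp only [mul_add, add_mul, mul_sub, sub_mul, mul_one, one_mul, mul_assoc, smul_mul_assoc,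
      a1, a2, r1, r2, c1, c2, c3, c4, hP, p1, hPp, hpP, mul_zero, zero_mul, neg_smul, neg_mul]
    abel
  · have u1 : IsUnit ((T - l • (1 : A)) * (1 - (P + p)) + (P + p)) := by
      have := ag_unit_comb hP (u := 1) (v := (T * (1 - P) - l • (1 : A)) * (1 - p) + p)
        (Commute.one_right P)
        (((cP1.sub_right (cs _ _)).mul_right ((Commute.one_right P).sub_right cPp)).add_right cPp)
        isUnit_one p3
      convert this using 1
      simp only [mul_add, add_mul, mul_sub, sub_mul, mul_one, one_mul, mul_assoc, smul_mul_assoc,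
        a1, a2, r1, r2, c1, c2, c3, c4, hP, p1, hPp, hpP, mul_zero, zero_mul, smul_zero, zero_mul]
      abel
    have u2 : IsUnit (Q * (1 - (P + p)) + (P + p)) := by
      have := ag_unit_comb p1 (u := 1) (v := Q * (1 - P) + P) (Commute.one_right p)
        ((cpQ.mul_right cN).add_right cPp.symm) isUnit_one hq
      convert this using 1
      simp only [mul_add, add_mul, mul_sub, sub_mul, mul_one, one_mul, mul_assoc, smul_mul_assoc,
        a4, a5, r4, r5, c1, c2, c3, c4, hP, p1, hPp, hpP, mul_zero, zero_mul, smul_zero, zero_mul]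
      abel
    have := u1.mul u2
    convert this using 1
    rw [map_mul, ← hQ, map_sub, aeval_X, aeval_C, Algebra.algebraMap_eq_smul_one]
    simp only [mul_add, add_mul, mul_sub, sub_mul, mul_one, one_mul, mul_assoc, smul_mul_assoc,
        a4, a5, r4, r5, c1, c2, c3, c4, hP, p1, hPp, hpP, mul_zero, zero_mul, smul_zero, zero_mul]
    abel

open Polynomial in
theorem ag_refine [CompleteSpace A] [Nontrivial A] {T : A} (h : ∃ P, AgGood T P) (n : ℕ) :
    ∀ (q : ℂ[X]), q.natDegree = n → q.eval 0 ≠ 0 →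
    ∃ P, AgGood T P ∧ IsUnit (aeval T q * (1 - P) + P) := by
  induction n with
  | zero =>
    intro q hq h0
    obtain ⟨P, hP⟩ := h
    refine ⟨P, hP, ?_⟩
    rw [eq_C_of_natDegree_eq_zero hq] at h0 ⊢
    rw [eval_C] at h0
    rw [aeval_C, Algebra.algebraMap_eq_smul_one]
    have := ag_unit_comb hP.1 (u := 1) (v := (q.coeff 0) • (1 : A)) (Commute.one_right P)
      ((Commute.one_right P).smul_right _) isUnit_one (ag_smul_unit h0)
    rwa [one_mul, add_comm] at this
  | succ n ih =>
    intro q hq h0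
    have hdeg : q.degree ≠ 0 := by
      intro hd; have := natDegree_eq_zero_iff_degree_le_zero.2 hd.le; omega
    obtain ⟨l, hl⟩ := IsAlgClosed.exists_root q hdeg
    obtain ⟨r, rfl⟩ := dvd_iff_isRoot.2 hl
    have hr0 : r ≠ 0 := by rintro rfl; simp at h0
    rw [natDegree_mul (X_sub_C_ne_zero l) hr0, natDegree_X_sub_C] at hq
    rw [eval_mul] at h0
    obtain ⟨P, hP, hPu⟩ := ih r (by omega) (right_ne_zero_of_mul h0)
    exact ag_step hP r hPu (by have := left_ne_zero_of_mul h0; simpa using this)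

open Polynomial in
theorem ag_shift (f : A) (m : ℂ[X]) (hm : m ≠ 0) (hf : aeval f m = 0) (l : ℂ) :
    ∃ m' : ℂ[X], m' ≠ 0 ∧ aeval (f - l • (1 : A)) m' = 0 := by
  refine ⟨m.comp (X + C l), ?_, ?_⟩
  · rwa [Ne, comp_X_add_C_eq_zero_iff]
  · rw [aeval_comp]
    simpa [Algebra.algebraMap_eq_smul_one] using hf

theorem ag_alg_gd [CompleteSpace A] [Nontrivial A] (f : A) (m : Polynomial ℂ) (hm : m ≠ 0)
    (hf : Polynomial.aeval f m = 0) : IsGDrazinInv f := by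
  obtain ⟨g, p, hg, p1, p2, p3⟩ := ag_alg f m hm hf
  rw [ag_gd_iff]
  refine ⟨p, p1, ?_, p2, ag_qn_nil p3⟩
  rw [hg]; exact (ag_aeval_comm (Commute.refl f) g).symm

theorem ag_acc_add [CompleteSpace A] [Nontrivial A] {a f : A} (hc : Commute a f) (ha : MemAcc a)
    (m : Polynomial ℂ) (hm : m ≠ 0) (hf : Polynomial.aeval f m = 0) (k : ℕ) (hk : a ^ k * f = 0) :
    MemAcc (a + f) := by
  intro l hl
  obtain ⟨g, p, hg, p1, p2, p3⟩ := ag_alg f m hm hf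
  have hpf : Commute p f := by rw [hg]; exact (ag_aeval_comm (Commute.refl f) g).symm
  have hpa : Commute p a := by rw [hg]; exact (ag_aeval_comm hc g).symm
  have cs : ∀ z : ℂ, ∀ x : A, Commute x (z • (1 : A)) := fun z x => (Commute.one_right x).smul_right z
  have cp1 : ∀ {x : A}, Commute p x → Commute (1 - p) x := fun h => (Commute.one_left _).sub_left h
  have g1 : IsGDrazinInv (a - l • (1 : A) + f * p) :=
    ag_gd_add_nil p3 ((hc.symm.mul_left hpa).sub_right (cs _ _)) (ha l hl)
  have n1 : IsNilpotent (a * (1 - p)) := by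
    have h0 : a ^ k * (1 - p) = 0 := by
      refine p2.mul_left_eq_zero.1 ?_
      have : a ^ k * (1 - p) * (f * (1 - p) + p) = a ^ k * f * (1 - p) := by
        have a1 : p * f = f * p := hpf
        have r1 : ∀ z, p * (f * z) = f * (p * z) := fun z => by rw [← mul_assoc, a1, mul_assoc]
        simp only [mul_add, add_mul, mul_sub, sub_mul, mul_one, one_mul, mul_assoc, a1, r1, p1]
        abel
      rw [this, hk, zero_mul]
    refine ⟨k + 1, ?_⟩
    rw [(cp1 hpa).symm.mul_pow, pow_succ' a, pow_succ', ← mul_assoc, mul_assoc a, h0, mul_zero, zero_mul]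
  obtain ⟨m', hm', hf'⟩ := ag_shift f m hm hf l
  have g2 : IsGDrazinInv (f - l • (1 : A) + a * (1 - p)) :=
    ag_gd_add_nil n1 ((hc.mul_left (cp1 hpf)).sub_right (cs _ _)) (ag_alg_gd _ m' hm' hf')
  have := ag_comb p1 ((hpa.sub_right (cs _ _)).add_right (hpf.mul_right (Commute.refl p)))
    ((hpf.sub_right (cs _ _)).add_right (hpa.mul_right (cp1 (Commute.refl p)).symm)) g1 g2
  convert this using 1
  simp only [mul_add, add_mul, mul_sub, sub_mul, mul_one, one_mul, mul_assoc, smul_mul_assoc, p1]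
  abel

open Polynomial in
theorem ag_main [CompleteSpace A] [Nontrivial A] {T F : A} (hc : Commute T F)
    (hT : IsAgDrazinInv T) (m : ℂ[X]) (hm : m ≠ 0) (hmF : aeval T m * F = 0)
    (halg : ∀ G : A, ∃ r : ℂ[X], r ≠ 0 ∧ aeval (G * F) r = 0) : IsAgDrazinInv (T + F) := by
  rw [ag_good_iff] at *
  obtain ⟨k, q, rfl, hq⟩ := ag_split m hm
  obtain ⟨P, ⟨hP, hPT, hu, hacc⟩, hqu⟩ := ag_refine hT _ q rfl hq
  have cs : ∀ z : ℂ, ∀ x : A, Commute x (z • (1 : A)) := fun z x => (Commute.one_right x).smul_right z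
  have cP1 : ∀ {x : A}, Commute P x → Commute (1 - P) x := fun h => (Commute.one_left _).sub_left h
  have cPQ := ag_aeval_comm hPT q
  have cFQ := ag_aeval_comm hc.symm q
  have cTQ := ag_aeval_comm (Commute.refl T) q
  set Q := aeval T q with hQ
  rw [map_mul, map_pow, aeval_X, ← hQ] at hmF
  have hN : (1 - P) * (1 - P) = 1 - P := by
    simp only [mul_sub, sub_mul, hP, mul_one, one_mul]; abel
  have hNP : (1 - P) * P = 0 := by rw [sub_mul, one_mul, hP, sub_self]
  have hPN : P * (1 - P) = 0 := by rw [mul_sub, mul_one, hP, sub_self]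
  have k1 : T ^ k * F * (1 - P) = 0 := by
    refine hqu.mul_left_eq_zero.1 ?_
    calc T ^ k * F * (1 - P) * (Q * (1 - P) + P)
        = T ^ k * F * ((1 - P) * Q) * (1 - P) + T ^ k * F * ((1 - P) * P) := by noncomm_ring
      _ = T ^ k * (F * Q) * ((1 - P) * (1 - P)) := by
        rw [hNP, (cP1 cPQ).eq]; simp only [mul_assoc, mul_zero, add_zero]
      _ = 0 := by rw [cFQ.eq, ← mul_assoc (T ^ k), hmF, zero_mul]
  have k2 : (1 - P) * F * T ^ k = 0 := by
    refine hqu.mul_right_eq_zero.1 ?_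
    calc (Q * (1 - P) + P) * ((1 - P) * F * T ^ k)
        = Q * ((1 - P) * (1 - P)) * F * T ^ k + P * (1 - P) * F * T ^ k := by noncomm_ring
      _ = (1 - P) * (Q * (F * T ^ k)) := by
        rw [hPN, hN, ← (cP1 cPQ).eq]; simp only [mul_assoc, zero_mul, add_zero]
      _ = 0 := by
        rw [← (hc.pow_left k).eq, ← mul_assoc Q, ← (cTQ.pow_left k).eq, hmF, mul_zero]
  have tp : ∀ n, (T * P + (1 - P)) ^ n * P = T ^ n * P := by
    intro n
    induction n with
    | zero => simp
    | succ n ih =>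
      have e : (T * P + (1 - P)) * P = P * T := by
        rw [add_mul, hNP, add_zero, mul_assoc, hP, hPT.eq]
      rw [pow_succ, mul_assoc, e, ← mul_assoc, ih, mul_assoc, hPT.eq, ← mul_assoc, pow_succ]
  have ct : Commute P (T * P + (1 - P)) :=
    (hPT.mul_right (Commute.refl P)).add_right (cP1 (Commute.refl P)).symm
  have k3 : P * F * (1 - P) = 0 := by
    refine (hu.pow k).mul_right_eq_zero.1 ?_
    rw [← mul_assoc, ← mul_assoc, tp, ← (hPT.pow_right k).eq, mul_assoc P, mul_assoc P, k1, mul_zero]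
  have k4 : (1 - P) * F * P = 0 := by
    refine (hu.pow k).mul_left_eq_zero.1 ?_
    rw [mul_assoc _ P, (ct.pow_right k).eq, tp, ← mul_assoc, k2, zero_mul]
  have hPF : Commute P F := by
    have z1 : P * F = P * F * P := by simpa [mul_sub, sub_eq_zero] using k3
    have z2 : F * P = P * F * P := by simpa [sub_mul, sub_eq_zero] using k4
    show P * F = F * P
    rw [z2, ← z1]
  have accN : MemAcc ((T + F) * (1 - P)) := by
    obtain ⟨r, hr, hrF⟩ := halg (1 - P)
    have := ag_acc_add (a := T * (1 - P)) (f := (1 - P) * F) ?_ hacc r hr hrF k ?_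
    · rwa [(cP1 hPF).eq, ← add_mul] at this
    · exact Commute.mul_left ((cP1 hPT).symm.mul_right hc)
        ((Commute.refl (1 - P)).mul_right (cP1 hPF))
    · have : ∀ n, (T * (1 - P)) ^ n * (1 - P) = T ^ n * (1 - P) := by
        intro n
        rw [(cP1 hPT).symm.mul_pow, mul_assoc, ← pow_succ, IsIdempotentElem.pow_succ_eq n hN]
      rw [← mul_assoc, this, mul_assoc, (cP1 hPF).eq, ← mul_assoc, k1]
  have cTt : Commute T (T * P + (1 - P)) :=
    ((Commute.refl T).mul_right hPT.symm).add_right (cP1 hPT).symm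
  have cFt : Commute F (T * P + (1 - P)) :=
    (hc.symm.mul_right hPF.symm).add_right (cP1 hPF).symm
  obtain ⟨t, ht⟩ := hu
  rw [← ht] at ct cTt cFt
  have hti : ∀ {x : A}, Commute x t → Commute x (↑t⁻¹ : A) := fun h => Commute.units_inv_right h
  obtain ⟨r, hr, hrF⟩ := halg (↑t⁻¹ * P)
  obtain ⟨r', hr', hrF'⟩ := ag_shift _ r hr hrF (-1)
  obtain ⟨h, hh⟩ : ∃ h, h = ↑t⁻¹ * P * F - (-1 : ℂ) • (1 : A) := ⟨_, rfl⟩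
  rw [← hh] at hrF'
  have ch : ∀ {x : A}, Commute x t → Commute x P → Commute x F → Commute x h := by
    intro x h1 h2 h3
    rw [hh]
    exact (((hti h1).mul_right h2).mul_right h3).sub_right (cs _ _)
  obtain ⟨g, p, hg, p1, p2, p3⟩ := ag_alg h r' hr' hrF'
  have cp : ∀ {x : A}, Commute x t → Commute x P → Commute x F → Commute x p := by
    intro x h1 h2 h3
    rw [hg]
    exact ag_aeval_comm (ch h1 h2 h3) g
  have cTh := ch cTt hPT.symm hc
  have cFh := ch cFt hPF.symm (Commute.refl F)
  have cPh := ch ct (Commute.refl P) hPF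
  have cth := ch (Commute.refl (t : A)) ct.symm cFt.symm
  have cTp := cp cTt hPT.symm hc
  have cFp := cp cFt hPF.symm (Commute.refl F)
  have cPp := cp ct (Commute.refl P) hPF
  have ctp := cp (Commute.refl (t : A)) ct.symm cFt.symm
  have chp : Commute h p := by rw [hg]; exact ag_aeval_comm (Commute.refl h) g
  have key : (t : A) * (h * P) = T * P + F * P := by
    have htP : (t : A) * P = T * P := by rw [ht, add_mul, hNP, add_zero, mul_assoc, hP]
    rw [hh, sub_mul, mul_sub, neg_smul, one_smul, neg_mul, one_mul, mul_neg, sub_neg_eq_add, htP]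
    rw [add_comm]; congr 1
    rw [mul_assoc, mul_assoc, Units.mul_inv_cancel_left, ← hPF.eq, ← mul_assoc, hP]
  clear_value Q
  clear hh hg
  obtain ⟨s, hs⟩ : ∃ s : A, s = t := ⟨_, rfl⟩
  have su : IsUnit s := hs ▸ t.isUnit
  rw [← hs] at ct cTt cFt cth ctp key
  have a1 : P * T = T * P := hPT
  have a2 : P * F = F * P := hPF
  have a3 : P * s = s * P := ct
  have a4 : P * h = h * P := cPh
  have a5 : p * T = T * p := cTp.symm
  have a6 : p * F = F * p := cFp.symm
  have a7 : p * s = s * p := ctp.symm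
  have a8 : p * h = h * p := chp.symm
  have a9 : p * P = P * p := cPp.symm
  have b1 : ∀ z, P * (T * z) = T * (P * z) := fun z => by rw [← mul_assoc, a1, mul_assoc]
  have b2 : ∀ z, P * (F * z) = F * (P * z) := fun z => by rw [← mul_assoc, a2, mul_assoc]
  have b3 : ∀ z, P * (s * z) = s * (P * z) := fun z => by rw [← mul_assoc, a3, mul_assoc]
  have b4 : ∀ z, P * (h * z) = h * (P * z) := fun z => by rw [← mul_assoc, a4, mul_assoc]
  have b5 : ∀ z, p * (T * z) = T * (p * z) := fun z => by rw [← mul_assoc, a5, mul_assoc]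
  have b6 : ∀ z, p * (F * z) = F * (p * z) := fun z => by rw [← mul_assoc, a6, mul_assoc]
  have b7 : ∀ z, p * (s * z) = s * (p * z) := fun z => by rw [← mul_assoc, a7, mul_assoc]
  have b8 : ∀ z, p * (h * z) = h * (p * z) := fun z => by rw [← mul_assoc, a8, mul_assoc]
  have b9 : ∀ z, p * (P * z) = P * (p * z) := fun z => by rw [← mul_assoc, a9, mul_assoc]
  have c1 : ∀ z, p * (p * z) = p * z := fun z => by rw [← mul_assoc, p1]
  have c2 : ∀ z, P * (P * z) = P * z := fun z => by rw [← mul_assoc, hP]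
  have key2 : ∀ z, s * (h * (P * z)) = T * (P * z) + F * (P * z) := fun z => by
    rw [← mul_assoc, ← mul_assoc, mul_assoc s, key, add_mul, mul_assoc, mul_assoc]
  have cp1 : ∀ {x : A}, Commute x p → Commute x (1 - p) := fun h => (Commute.one_right _).sub_right h
  refine ⟨P * (1 - p), ?_, ?_, ?_, ?_⟩
  · simp only [mul_add, add_mul, mul_sub, sub_mul, mul_one, one_mul, mul_assoc, a9, b9, c1, c2, hP, p1]
    abel
  · exact (hPT.mul_left (cp1 cTp).symm).add_right (hPF.mul_left (cp1 cFp).symm)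
  · have i1 := ag_unit_comb p1 (u := 1) (v := s * (h * (1 - p) + p)) (Commute.one_right p)
      (ctp.symm.mul_right ((chp.symm.mul_right (cp1 (Commute.refl p))).add_right (Commute.refl p)))
      isUnit_one (su.mul p2)
    have i2 := ag_unit_comb hP (v := 1) ?_ (Commute.one_right P) i1 isUnit_one
    · convert i2 using 1
      simp only [mul_add, add_mul, mul_sub, sub_mul, mul_one, one_mul, mul_assoc, a1, a2, a3, a4, a5,
        a6, a7, a8, a9, b1, b2, b3, b4, b5, b6, b7, b8, b9, c1, c2, hP, p1, key, key2]
      abel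
    · exact ((Commute.one_right P).mul_right cPp).add_right
        ((ct.mul_right ((cPh.mul_right (cp1 cPp)).add_right cPp)).mul_right (cp1 cPp))
  · intro l hl
    have n1 : IsNilpotent (s * (h * p)) :=
      (cth.mul_right ctp).isNilpotent_mul_left p3
    have g1 : IsGDrazinInv ((-l) • (1 : A) + s * (h * p)) :=
      ag_gd_add_nil n1 (cs _ _) (ag_unit_gd (ag_smul_unit (neg_ne_zero.2 hl)))
    have g2 := ag_comb hP ((cs _ _).add_right (ct.mul_right (cPh.mul_right cPp)))
      (((hPT.add_right hPF).mul_right (cP1 (Commute.refl P)).symm).sub_right (cs _ _)) g1 (accN l hl)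
    convert g2 using 1
    simp only [mul_add, add_mul, mul_sub, sub_mul, mul_one, one_mul, mul_assoc, a1, a2, a3, a4, a5,
      a6, a7, a8, a9, b1, b2, b3, b4, b5, b6, b7, b8, b9, c1, c2, hP, p1, key, key2,
      smul_mul_assoc, neg_smul, neg_mul]
    abel

end
section
open Polynomial
theorem ag_fin {X : Type*} [NormedAddCommGroup X] [NormedSpace ℂ X] (T F : X →L[ℂ] X)
    (hF : FiniteDimensional ℂ (LinearMap.range (F : X →ₗ[ℂ] X)))
    (hcomm : T * F = F * T) : ∃ m : ℂ[X], m ≠ 0 ∧ aeval T m * F = 0 := by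
  let R := LinearMap.range (F : X →ₗ[ℂ] X)
  have hinv : ∀ x ∈ R, (T : X →ₗ[ℂ] X) x ∈ R := by
    rintro _ ⟨y, rfl⟩
    exact ⟨T y, (congrArg (fun G : X →L[ℂ] X => G y) hcomm).symm⟩
  let T' : Module.End ℂ R := (T : X →ₗ[ℂ] X).restrict hinv
  refine ⟨T'.charpoly, (LinearMap.charpoly_monic T').ne_zero, ?_⟩
  have key : ∀ (q : ℂ[X]) (y : R), (aeval T q) (y : X) = ((aeval T' q) y : X) := by
    intro q
    refine Polynomial.induction_on' q ?_ ?_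
    · intro r s hr hs y
      simp [hr, hs]
    · intro n a y
      have : ∀ y : R, (T ^ n) (y : X) = ((T' ^ n) y : X) := by
        induction n with
        | zero => simp
        | succ n ih => intro y; rw [pow_succ, pow_succ]; exact ih (T' y)
      simp [aeval_monomial, Algebra.algebraMap_eq_smul_one, this]
  ext x
  have := key T'.charpoly ⟨F x, ⟨x, rfl⟩⟩
  rw [LinearMap.aeval_self_charpoly] at this
  simpa using this
end

theorem agDrazin_add_finiteRank {X : Type*} [NormedAddCommGroup X] [NormedSpace ℂ X]
    [CompleteSpace X] (T F : X →L[ℂ] X)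
    (hT : IsAgDrazinInv T)
    (hF : FiniteDimensional ℂ (LinearMap.range (F : X →ₗ[ℂ] X)))
    (hcomm : T * F = F * T) :
    IsAgDrazinInv (T + F) := by
  have hnt : Nontrivial (X →L[ℂ] X) := by
    by_contra hn
    rw [not_nontrivial_iff_subsingleton] at hn
    obtain ⟨x, -, -, h⟩ := hT
    obtain ⟨y, -, -, h⟩ := h 1 one_ne_zero
    have h0 : (0 : ℂ) ∈ spectrum ℂ (T - T ^ 2 * x - (1 : ℂ) • (1 : X →L[ℂ] X) -
        (T - T ^ 2 * x - (1 : ℂ) • (1 : X →L[ℂ] X)) ^ 2 * y) := by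
      rw [h]; rfl
    exact h0 (isUnit_of_subsingleton _)
  obtain ⟨m, hm, hmF⟩ := ag_fin T F hF hcomm
  refine ag_main hcomm hT m hm hmF fun G => ?_
  have hGF : FiniteDimensional ℂ (LinearMap.range ((G * F : X →L[ℂ] X) : X →ₗ[ℂ] X)) := by
    have : LinearMap.range ((G * F : X →L[ℂ] X) : X →ₗ[ℂ] X)
        = (LinearMap.range (F : X →ₗ[ℂ] X)).map (G : X →ₗ[ℂ] X) := by
      rw [← LinearMap.range_comp]; rfl
    rw [this]
    infer_instance
  obtain ⟨r, hr, hrG⟩ := ag_fin (G * F) (G * F) hGF rfl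
  refine ⟨r * Polynomial.X, mul_ne_zero hr Polynomial.X_ne_zero, ?_⟩
  rw [map_mul, Polynomial.aeval_X, hrG]
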